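/- Let 0<c₁<⋯<c_m be non-integer reals. There exists a constant C>0 depending only on c₁,…,c_m, m with the following property: for every real N≥1, every δ∈(0,1], and all ξ₁,…,ξ_m∈[−1/2,1/2), if δ ≤ | (1/N) ∑_{n=1}^{N} 1_{n>N/2} e(ξ₁⌊n^{c₁}⌋+⋯+ξ_m⌊n^{c_m}⌋) |, then either N ≤ C δ^{−C}, or there exist integers k₁,…,k_m with |k_i| ≤ C δ^{−C} for all i such that δ^{C}/C ≤ | (1/N) ∑_{n=1}^{N} 1_{n>N/2} e((ξ₁+k₁) n^{c₁}+⋯+(ξ_m+k_m) n^{c_m}) |. -/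

import Mathlib

/-!
Write `e(ξ ⌊x⌋) = e(ξ x) φ(x)` with `φ(x) = e(-ξ {x})`, a `1`-periodic function that is Lipschitz
except for a jump at the integers. Replace each `φ` by its Fejér interpolant at `K` equally spaced
nodes, a trigonometric polynomial of degree less than `K` bounded by `1`. Expanding the product of
the interpolants turns the floor sum into a combination of the sums with frequencies `ξ_i + k_i`,
`|k_i| < K`, and by pigeonhole one of these is large. Here `K` is a power of `1/δ`.

The replacement costs little provided few of the points `n^{c_i}` are near an integer. Each exponent
can be treated separately, and counting the bad points reduces to cancellation in `∑ e(k n^c)` for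
`1 ≤ k ≤ R`. That follows from van der Corput differencing applied `⌊c⌋` times and then the
Kusmin–Landau bound; this is where `c ∉ ℤ` and the alternative `N ≤ C δ^{-C}` enter.
-/

open MeasureTheory Filter Finset
open scoped ENNReal NNReal

noncomputable section

/-- `e(x) = e^{2πix}`. -/
def eC (x : ℝ) : ℂ := Complex.exp (2 * Real.pi * Complex.I * x)

/-- The symbol of the upper-half discrete averaging operator:
`m_{N;ℤ}(ξ) = (1/N) ∑_{n=1}^{N} 1_{n>N/2} e(ξ₁⌊n^{c₁}⌋ + ⋯ + ξ_m⌊n^{c_m}⌋)`. -/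
def mZ (m : ℕ) (c : Fin m → ℝ) (N : ℕ) (ξ : Fin m → ℝ) : ℂ :=
  (N : ℂ)⁻¹ * ∑ n ∈ Finset.Icc 1 N,
    if N < 2 * n then eC (∑ i, ξ i * (⌊(n : ℝ) ^ c i⌋ : ℝ)) else 0

open scoped fwdDiff

/-! ### The character `e` -/

lemma eC_eq_fourierChar (x : ℝ) : eC x = Real.fourierChar x := by
  rw [eC, Real.fourierChar_apply]
  congr 1
  push_cast
  ring

lemma eC_zero : eC 0 = 1 := by
  rw [eC_eq_fourierChar, AddChar.map_zero_eq_one, Circle.coe_one]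

lemma eC_add (x y : ℝ) : eC (x + y) = eC x * eC y := by
  simp only [eC_eq_fourierChar, AddChar.map_add_eq_mul, Circle.coe_mul]

lemma eC_sum {ι : Type*} (s : Finset ι) (g : ι → ℝ) : eC (∑ i ∈ s, g i) = ∏ i ∈ s, eC (g i) := by
  simp only [eC, ← Complex.exp_sum, Complex.ofReal_sum, Finset.mul_sum]

lemma eC_nat_mul (n : ℕ) (x : ℝ) : eC (n * x) = eC x ^ n := by
  rw [← nsmul_eq_mul, eC_eq_fourierChar, AddChar.map_nsmul_eq_pow, Circle.coe_pow,
    ← eC_eq_fourierChar]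

lemma conj_eC (x : ℝ) : (starRingEnd ℂ) (eC x) = eC (-x) := by
  rw [eC_eq_fourierChar, eC_eq_fourierChar, AddChar.map_neg_eq_inv, Circle.coe_inv_eq_conj]

lemma norm_eC (x : ℝ) : ‖eC x‖ = 1 := by
  rw [eC_eq_fourierChar, Circle.norm_coe]

lemma norm_sum_eC_le_card {α : Type*} (T : Finset α) (f : α → ℝ) : ‖∑ n ∈ T, eC (f n)‖ ≤ #T :=
  (norm_sum_le _ _).trans (by simp only [norm_eC, sum_const, nsmul_eq_mul, mul_one, le_refl])

lemma eC_eq_one_iff {x : ℝ} : eC x = 1 ↔ ∃ k : ℤ, x = k := by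
  simp_rw [eC, Complex.exp_eq_one_iff, mul_comm (_ : ℂ) (2 * Real.pi * Complex.I),
    mul_right_inj' Complex.two_pi_I_ne_zero]
  norm_cast

lemma eC_intCast (k : ℤ) : eC k = 1 := eC_eq_one_iff.2 ⟨k, rfl⟩

lemma eC_sub_intCast (x : ℝ) (k : ℤ) : eC (x - k) = eC x := by
  rw [← mul_one (eC (x - k)), ← eC_intCast k, ← eC_add, sub_add_cancel]

lemma norm_eC_sub_one (x : ℝ) : ‖eC x - 1‖ = 2 * |Real.sin (Real.pi * x)| := by
  have hx : eC x = Complex.exp (Complex.I * (2 * Real.pi * x : ℝ)) := by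
    rw [eC]
    congr 1
    push_cast
    ring
  rw [hx, Complex.norm_exp_I_mul_ofReal_sub_one, norm_mul, Real.norm_ofNat, Real.norm_eq_abs]
  congr 3
  ring

lemma norm_eC_sub_le (x y : ℝ) : ‖eC x - eC y‖ ≤ 2 * Real.pi * |x - y| := by
  have hfactor : eC x - eC y = eC y * (eC (x - y) - 1) := by
    rw [mul_sub, ← eC_add, add_sub_cancel, mul_one]
  calc ‖eC x - eC y‖ = 2 * |Real.sin (Real.pi * (x - y))| := by
        rw [hfactor, norm_mul, norm_eC, one_mul, norm_eC_sub_one]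
    _ ≤ 2 * |Real.pi * (x - y)| := by gcongr 2 * ?_; exact Real.abs_sin_le_abs
    _ = 2 * Real.pi * |x - y| := by rw [abs_mul, abs_of_pos Real.pi_pos, mul_assoc]

lemma le_abs_sub_round {y η : ℝ} (hη : η ≤ |y|) (hη' : |y| ≤ 1 - η) : η ≤ |y - round y| := by
  rcases eq_or_ne (round y) 0 with hy | hy
  · rwa [hy, Int.cast_zero, sub_zero]
  · have hround : (1 : ℝ) ≤ |(round y : ℝ)| := by exact_mod_cast Int.one_le_abs hy
    linarith [abs_sub_abs_le_abs_sub (round y : ℝ) y, abs_sub_comm (round y : ℝ) y]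

lemma four_mul_abs_sub_round_le_norm_eC_sub_one (x : ℝ) : 4 * |x - round x| ≤ ‖eC x - 1‖ := by
  rw [← eC_sub_intCast x (round x), norm_eC_sub_one]
  set y := x - round x
  have hy : |Real.pi * y| = Real.pi * |y| := by rw [abs_mul, abs_of_pos Real.pi_pos]
  have hsin : 2 / Real.pi * |Real.pi * y| ≤ |Real.sin (Real.pi * y)| :=
    Real.mul_abs_le_abs_sin (by nlinarith [Real.pi_pos, abs_sub_round x])
  have hcancel : 2 / Real.pi * (Real.pi * |y|) = 2 * |y| := by field_simp
  rw [hy, hcancel] at hsin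
  linarith

lemma sq_norm_sum_eC {κ : Type*} (s : Finset κ) (g : κ → ℝ) :
    ((‖∑ h ∈ s, eC (g h)‖ ^ 2 : ℝ) : ℂ) = ∑ h ∈ s, ∑ l ∈ s, eC (g h - g l) := by
  push_cast
  rw [← Complex.mul_conj', map_sum, Finset.sum_mul_sum]
  simp_rw [conj_eC, ← eC_add, sub_eq_add_neg]

lemma abs_sum_sq_norm_sum_eC_sub_le {α κ : Type*} [LinearOrder κ] (T : Finset α) (s : Finset κ)
    (x : κ → α → ℝ) {E : ℝ} (hE₀ : 0 ≤ E)
    (hE : ∀ l ∈ s, ∀ h ∈ s, l < h → ‖∑ n ∈ T, eC (x h n - x l n)‖ ≤ E) :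
    |∑ n ∈ T, ‖∑ h ∈ s, eC (x h n)‖ ^ 2 - #s * (#T : ℝ)| ≤ (#s : ℝ) ^ 2 * E := by
  have hexpand : ((∑ n ∈ T, ‖∑ h ∈ s, eC (x h n)‖ ^ 2 - #s * (#T : ℝ) : ℝ) : ℂ)
      = ∑ h ∈ s, ∑ l ∈ s, (∑ n ∈ T, eC (x h n - x l n) - if h = l then (#T : ℂ) else 0) := by
    have hdiag : ∑ h ∈ s, ∑ l ∈ s, (if h = l then (#T : ℂ) else 0) = #s * #T := by
      rw [Finset.sum_congr rfl fun h hh => by rw [Finset.sum_ite_eq, if_pos hh], sum_const,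
        nsmul_eq_mul]
    simp_rw [Complex.ofReal_sub, Complex.ofReal_sum, sq_norm_sum_eC, Finset.sum_sub_distrib, hdiag]
    rw [Finset.sum_comm, Finset.sum_congr rfl fun h _ => Finset.sum_comm]
    push_cast
    rfl
  have hcorr : ∀ h ∈ s, ∀ l ∈ s,
      ‖∑ n ∈ T, eC (x h n - x l n) - if h = l then (#T : ℂ) else 0‖ ≤ E := by
    intro h hh l hl
    rcases lt_trichotomy h l with hlt | rfl | hgt
    · rw [if_neg hlt.ne, sub_zero, ← Complex.norm_conj, map_sum]
      simp_rw [conj_eC, neg_sub]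
      exact hE h hh l hl hlt
    · simpa [eC_zero] using hE₀
    · rw [if_neg hgt.ne', sub_zero]
      exact hE l hl h hh hgt
  rw [← Real.norm_eq_abs, ← Complex.norm_real, hexpand]
  calc _ ≤ ∑ _h ∈ s, ∑ _l ∈ s, E :=
        norm_sum_le_of_le _ fun h hh => norm_sum_le_of_le _ fun l hl => hcorr h hh l hl
    _ = (#s : ℝ) ^ 2 * E := by simp only [sum_const, nsmul_eq_mul]; ring

/-! ### Van der Corput's method -/

lemma norm_sum_mul_sub_le (u w : ℕ → ℂ) (hw : ∀ n, ‖w n‖ ≤ 1) (L : ℕ) :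
    ‖∑ n ∈ range (L + 1), u n * (w (n + 1) - w n)‖
      ≤ 2 * (‖u L‖ + ∑ n ∈ range L, ‖u (n + 1) - u n‖) := by
  have hparts := Finset.sum_range_by_parts u (fun n => w (n + 1) - w n) (L + 1)
  simp only [Finset.sum_range_sub, smul_eq_mul, add_tsub_cancel_right] at hparts
  have hw₂ : ∀ n, ‖w n - w 0‖ ≤ 2 := fun n => by
    linarith [norm_sub_le (w n) (w 0), hw n, hw 0]
  rw [hparts, mul_add, Finset.mul_sum]
  refine (norm_sub_le _ _).trans (add_le_add ?_ (norm_sum_le_of_le _ fun n _ => ?_)) <;>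
  · rw [norm_mul, mul_comm]
    gcongr
    exact hw₂ _

/-- The hypothesis under which van der Corput's method bounds `∑_{n < L} e(f n)`: the discrete
analogue of `f⁽ʲ⁾ ≍ λ` and `f⁽ʲ⁺¹⁾ ≪ λ / N`, with both implied constants equal to `B`. -/
structure HasFwdDiffSize (f : ℕ → ℝ) (j L : ℕ) (B lam N : ℝ) : Prop where
  le_fwdDiff : ∀ n < L, lam ≤ (Δ_[1])^[j] f n
  fwdDiff_le : ∀ n < L, (Δ_[1])^[j] f n ≤ B * lam
  abs_fwdDiff_succ_le : ∀ n < L, |(Δ_[1])^[j + 1] f n| ≤ B * lam / N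

lemma fwdDiff_iter_shift_sub_shift (f : ℕ → ℝ) (j l d n : ℕ) :
    (Δ_[1])^[j] (fun n => f (n + (l + d)) - f (n + l)) n
      = ∑ i ∈ range d, (Δ_[1])^[j + 1] f (n + (l + i)) := by
  have htelescope : (fun n => f (n + (l + d)) - f (n + l))
      = ∑ i ∈ range d, fun n => Δ_[1] f (n + (l + i)) := by
    ext n
    rw [Finset.sum_apply]
    exact (Finset.sum_range_sub (fun i => f (n + (l + i))) d).symm
  rw [htelescope, fwdDiff_iter_finsetSum, Finset.sum_apply]
  simp only [fwdDiff_iter_comp_add, Function.iterate_succ_apply]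

lemma HasFwdDiffSize.shift_sub_shift {f : ℕ → ℝ} {j M H l d : ℕ} {B lam N : ℝ}
    (hf : HasFwdDiffSize f (j + 1) (M + H) B lam N) (hld : l + d ≤ H) :
    HasFwdDiffSize (fun n => f (n + (l + d)) - f (n + l)) j M B (d * lam) N := by
  have hlt : ∀ n < M, ∀ i ∈ range d, n + (l + i) < M + H := fun n hn i hi => by
    have := mem_range.1 hi
    omega
  have hcard : ∀ a : ℝ, d * a = #(range d) • a := fun a => by rw [card_range, nsmul_eq_mul]
  refine ⟨fun n hn => ?_, fun n hn => ?_, fun n hn => ?_⟩ <;>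
    rw [fwdDiff_iter_shift_sub_shift]
  · rw [hcard]
    exact card_nsmul_le_sum _ _ _ fun i hi => hf.le_fwdDiff _ (hlt n hn i hi)
  · rw [mul_left_comm, hcard]
    exact sum_le_card_nsmul _ _ _ fun i hi => hf.fwdDiff_le _ (hlt n hn i hi)
  · rw [mul_left_comm, mul_div_assoc, hcard]
    exact (abs_sum_le_sum_abs _ _).trans
      (sum_le_card_nsmul _ _ _ fun i hi => hf.abs_fwdDiff_succ_le _ (hlt n hn i hi))

lemma HasFwdDiffSize.four_mul_le_norm_eC_sub_one {f : ℕ → ℝ} {j L n : ℕ} {B lam N : ℝ}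
    (hf : HasFwdDiffSize f j L B lam N) (hlam : 0 < lam) (hB : B * lam ≤ 1 / 2) (hn : n < L) :
    4 * lam ≤ ‖eC ((Δ_[1])^[j] f n) - 1‖ := by
  have hlow := hf.le_fwdDiff n hn
  have hup := hf.fwdDiff_le n hn
  have habs : |(Δ_[1])^[j] f n| = (Δ_[1])^[j] f n := abs_of_pos (hlam.trans_le hlow)
  refine le_trans ?_ (four_mul_abs_sub_round_le_norm_eC_sub_one _)
  gcongr
  exact le_abs_sub_round (by rwa [habs]) (by rw [habs]; linarith)

lemma norm_inv_eC_sub_one_sub_le {x y μ : ℝ} (hμ : 0 < μ) (hx : μ ≤ ‖eC x - 1‖)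
    (hy : μ ≤ ‖eC y - 1‖) :
    ‖(eC x - 1)⁻¹ - (eC y - 1)⁻¹‖ ≤ 2 * Real.pi * |x - y| / μ ^ 2 := by
  have hx₀ : eC x - 1 ≠ 0 := norm_pos_iff.1 (hμ.trans_le hx)
  have hy₀ : eC y - 1 ≠ 0 := norm_pos_iff.1 (hμ.trans_le hy)
  rw [inv_sub_inv hx₀ hy₀, sub_sub_sub_cancel_right, norm_div, norm_mul, norm_sub_rev, sq]
  gcongr
  exact norm_eC_sub_le x y

lemma norm_sum_eC_le_two_mul_variation {f : ℕ → ℝ} {L : ℕ}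
    (hf : ∀ n < L + 1, eC (Δ_[1] f n) - 1 ≠ 0) :
    ‖∑ n ∈ range (L + 1), eC (f n)‖ ≤ 2 * (‖(eC (Δ_[1] f L) - 1)⁻¹‖
      + ∑ n ∈ range L, ‖(eC (Δ_[1] f (n + 1)) - 1)⁻¹ - (eC (Δ_[1] f n) - 1)⁻¹‖) := by
  refine le_of_eq_of_le (congrArg norm (Finset.sum_congr rfl fun n hn => ?_))
    (norm_sum_mul_sub_le (fun n => (eC (Δ_[1] f n) - 1)⁻¹) (fun n => eC (f n))
      (fun n => (norm_eC _).le) L)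
  have hstep : f (n + 1) = f n + Δ_[1] f n := (add_sub_cancel _ _).symm
  rw [hstep, eC_add, ← mul_sub_one, mul_left_comm, inv_mul_cancel₀ (hf n (mem_range.1 hn)), mul_one]

/-- A crude form of the Kusmin–Landau inequality: monotonicity of the first difference is replaced
by a bound on the second, which makes the total variation of `1 / (e(Δf) - 1)` at most
`O(B / λ)`. -/
lemma norm_sum_eC_le_of_hasFwdDiffSize_one {f : ℕ → ℝ} {L : ℕ} {B lam N : ℝ}
    (hf : HasFwdDiffSize f 1 L B lam N) (hB : 1 ≤ B) (hlam : 0 < lam) (hBlam : B * lam ≤ 1 / 2)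
    (hLN : L ≤ N) : ‖∑ n ∈ range L, eC (f n)‖ ≤ 2 * B / lam := by
  rcases L with _ | L
  · rw [range_zero, sum_empty, norm_zero]
    positivity
  push_cast at hLN
  have hN : 0 < N := by linarith [(L.cast_nonneg : (0 : ℝ) ≤ L)]
  set d : ℕ → ℝ := Δ_[1] f
  set u : ℕ → ℂ := fun n => (eC (d n) - 1)⁻¹
  have hnorm : ∀ n < L + 1, 4 * lam ≤ ‖eC (d n) - 1‖ := fun n hn =>
    hf.four_mul_le_norm_eC_sub_one hlam hBlam hn
  have hne : ∀ n < L + 1, eC (d n) - 1 ≠ 0 := fun n hn =>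
    norm_pos_iff.1 (lt_of_lt_of_le (by positivity) (hnorm n hn))
  have hu : ∀ n < L + 1, ‖u n‖ ≤ (4 * lam)⁻¹ := fun n hn => by
    rw [norm_inv]
    exact inv_anti₀ (by positivity) (hnorm n hn)
  have hvar : ∀ n < L, ‖u (n + 1) - u n‖ ≤ B / (2 * lam * N) := fun n hn => by
    calc ‖u (n + 1) - u n‖ ≤ 2 * Real.pi * |d (n + 1) - d n| / (4 * lam) ^ 2 :=
          norm_inv_eC_sub_one_sub_le (by positivity) (hnorm _ (by omega)) (hnorm _ (by omega))
      _ ≤ 2 * Real.pi * (B * lam / N) / (4 * lam) ^ 2 := by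
          gcongr
          exact hf.abs_fwdDiff_succ_le n (by omega)
      _ = Real.pi / 4 * (B / (2 * lam * N)) := by field_simp; ring
      _ ≤ B / (2 * lam * N) :=
          mul_le_of_le_one_left (by positivity) (by linarith [Real.pi_le_four])
  calc ‖∑ n ∈ range (L + 1), eC (f n)‖
      ≤ 2 * (‖u L‖ + ∑ n ∈ range L, ‖u (n + 1) - u n‖) := norm_sum_eC_le_two_mul_variation hne
    _ ≤ 2 * ((4 * lam)⁻¹ + L * (B / (2 * lam * N))) := by
        gcongr
        · exact hu L L.lt_succ_self
        · exact (Finset.sum_le_card_nsmul _ _ _ fun n hn => hvar n (mem_range.1 hn)).trans_eq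
            (by rw [card_range, nsmul_eq_mul])
    _ ≤ 2 * (B * (4 * lam)⁻¹ + N * (B / (2 * lam * N))) := by
        gcongr
        · exact le_mul_of_one_le_left (by positivity) hB
        · linarith
    _ = 3 / 4 * (2 * B / lam) := by field_simp; ring
    _ ≤ 2 * B / lam := mul_le_of_le_one_left (by positivity) (by norm_num)

lemma norm_sum_range_sub_sum_range_shift_le (f : ℕ → ℝ) (M : ℕ) {h H : ℕ} (hH : h ≤ H) :
    ‖∑ n ∈ range (M + H), eC (f n) - ∑ n ∈ range M, eC (f (n + h))‖ ≤ H := by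
  obtain ⟨r, rfl⟩ := Nat.exists_eq_add_of_le hH
  have hsplit : ∑ n ∈ range (M + (h + r)), eC (f n) - ∑ n ∈ range M, eC (f (n + h))
      = ∑ n ∈ range h, eC (f n) + ∑ n ∈ range r, eC (f (h + M + n)) := by
    rw [← add_assoc, add_comm M h, Finset.sum_range_add, Finset.sum_range_add]
    simp_rw [add_comm h]
    ring
  rw [hsplit]
  refine (norm_add_le_of_le (norm_sum_eC_le_card _ _) (norm_sum_eC_le_card _ _)).trans_eq ?_
  rw [card_range, card_range, Nat.cast_add]

/-- Van der Corput's inequality: average the sum over shifts by `h < H`, and let Cauchy–Schwarz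
bring in the correlations of the shifted sequences. -/
lemma norm_sum_eC_le_of_correlation_le (f : ℕ → ℝ) (M : ℕ) {H : ℕ} (hH : 0 < H) {E : ℝ}
    (hE₀ : 0 ≤ E)
    (hE : ∀ l d, 0 < d → l + d ≤ H → ‖∑ n ∈ range M, eC (f (n + (l + d)) - f (n + l))‖ ≤ E) :
    ‖∑ n ∈ range (M + H), eC (f n)‖ ≤ H + √(M * (M / H + E)) := by
  have hHr : (0 : ℝ) < H := by exact_mod_cast hH
  set S := ∑ n ∈ range (M + H), eC (f n)
  set V : ℕ → ℂ := fun n => ∑ h ∈ range H, eC (f (n + h))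
  have haverage : (H : ℝ) * ‖S‖ ≤ H * H + ∑ n ∈ range M, ‖V n‖ := by
    have hsplit : (H : ℂ) * S = ∑ h ∈ range H, (S - ∑ n ∈ range M, eC (f (n + h)))
        + ∑ n ∈ range M, V n := by
      rw [Finset.sum_sub_distrib, Finset.sum_comm (s := range M), sub_add_cancel, sum_const,
        card_range, nsmul_eq_mul]
    have hshift : ‖∑ h ∈ range H, (S - ∑ n ∈ range M, eC (f (n + h)))‖ ≤ H * H :=
      (norm_sum_le_of_le _ fun h hh =>
        norm_sum_range_sub_sum_range_shift_le f M (mem_range.1 hh).le).trans_eq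
          (by rw [sum_const, card_range, nsmul_eq_mul])
    calc (H : ℝ) * ‖S‖ = ‖(H : ℂ) * S‖ := by rw [norm_mul, Complex.norm_natCast]
      _ ≤ _ := by rw [hsplit]; exact norm_add_le_of_le hshift (norm_sum_le _ _)
  have hsquare : ∑ n ∈ range M, ‖V n‖ ^ 2 ≤ H * M + H ^ 2 * E := by
    have := abs_sum_sq_norm_sum_eC_sub_le (range M) (range H) (fun h n => f (n + h)) hE₀
      fun l _ h hh hlh => by
        obtain ⟨d, rfl⟩ := Nat.exists_eq_add_of_le hlh.le
        exact hE l d (by omega) (mem_range.1 hh).le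
    rw [card_range, card_range] at this
    linarith [(abs_le.1 this).2]
  have hcauchy : ∑ n ∈ range M, ‖V n‖ ≤ H * √(M * (M / H + E)) := by
    have hsqrt : H * √(M * (M / H + E)) = √((H : ℝ) ^ 2 * (M * (M / H + E))) := by
      rw [Real.sqrt_mul (sq_nonneg (H : ℝ)), Real.sqrt_sq hHr.le]
    rw [hsqrt]
    refine Real.le_sqrt_of_sq_le ?_
    calc (∑ n ∈ range M, ‖V n‖) ^ 2 ≤ M * ∑ n ∈ range M, ‖V n‖ ^ 2 := by
          simpa only [card_range] using sq_sum_le_card_mul_sum_sq (s := range M) (f := (‖V ·‖))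
      _ ≤ M * (H * M + H ^ 2 * E) := by gcongr
      _ = H ^ 2 * (M * (M / H + E)) := by field_simp
  refine le_of_mul_le_mul_left ?_ hHr
  linarith

lemma eventually_mul_pow_le_rpow (X : ℝ) (e : ℕ) {σ : ℝ} (hσ : 0 < σ) :
    ∀ᶠ A : ℕ in atTop, ∀ R N : ℝ, 1 ≤ R → A * R ^ A ≤ N → X * R ^ e ≤ N ^ σ := by
  have hX : ∀ᶠ A : ℕ in atTop, X ≤ (A : ℝ) ^ σ :=
    ((tendsto_rpow_atTop hσ).comp tendsto_natCast_atTop_atTop).eventually_ge_atTop X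
  have he : ∀ᶠ A : ℕ in atTop, (e : ℝ) ≤ A * σ :=
    (tendsto_natCast_atTop_atTop.atTop_mul_const hσ).eventually_ge_atTop _
  filter_upwards [hX, he] with A hXA heA R N hR hN
  have hR₀ : 0 ≤ R := zero_le_one.trans hR
  calc X * R ^ e ≤ (A : ℝ) ^ σ * R ^ (A * σ) := by
        rw [← Real.rpow_natCast R e]
        gcongr
    _ = (A * R ^ A) ^ σ := by
        rw [Real.mul_rpow (by positivity) (by positivity), Real.rpow_mul hR₀, Real.rpow_natCast]
    _ ≤ N ^ σ := by gcongr

lemma eventually_mul_pow_le (X : ℝ) (e : ℕ) :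
    ∀ᶠ A : ℕ in atTop, ∀ R : ℝ, 1 ≤ R → X * R ^ e ≤ A * R ^ A := by
  filter_upwards [eventually_mul_pow_le_rpow X e one_pos] with A hA R hR
  simpa only [Real.rpow_one] using hA R _ hR le_rfl

lemma norm_sum_eC_le_div_of_correlation_le {f : ℕ → ℝ} {L N Q : ℕ} (hQ : 1 ≤ Q) (hLN : L ≤ N)
    (hN : 16 * (Q : ℝ) ^ 3 ≤ N)
    (hf : ∀ M, M + 8 * Q ^ 2 = L → ∀ l d, 0 < d → l + d ≤ 8 * Q ^ 2 →
      ‖∑ n ∈ range M, eC (f (n + (l + d)) - f (n + l))‖ ≤ N / (8 * Q ^ 2 : ℕ)) :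
    ‖∑ n ∈ range L, eC (f n)‖ ≤ N / Q := by
  have hQr : (0 : ℝ) < Q := by exact_mod_cast hQ
  have hlength : ((8 * Q ^ 2 : ℕ) : ℝ) ≤ N / (2 * Q) := by
    rw [le_div_iff₀ (by positivity)]
    push_cast
    linarith
  have hhalf : (N : ℝ) / (2 * Q) ≤ N / Q := by
    gcongr
    linarith
  rcases le_total L (8 * Q ^ 2) with hL | hL
  · refine (norm_sum_eC_le_card _ _).trans ?_
    rw [card_range]
    exact (Nat.cast_le.2 hL).trans (hlength.trans hhalf)
  · obtain ⟨M, rfl⟩ := Nat.exists_eq_add_of_le' hL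
    have hM : (M : ℝ) ≤ N := by exact_mod_cast (Nat.le_add_right M _).trans hLN
    have hsqrt : √(M * (M / (8 * Q ^ 2 : ℕ) + N / (8 * Q ^ 2 : ℕ))) ≤ N / (2 * Q) := by
      refine Real.sqrt_le_iff.2 ⟨by positivity, ?_⟩
      calc (M : ℝ) * (M / (8 * Q ^ 2 : ℕ) + N / (8 * Q ^ 2 : ℕ))
          ≤ N * (N / (8 * Q ^ 2 : ℕ) + N / (8 * Q ^ 2 : ℕ)) := by gcongr
        _ = (N / (2 * Q) : ℝ) ^ 2 := by
            push_cast
            field_simp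
            ring
    calc _ ≤ ((8 * Q ^ 2 : ℕ) : ℝ) + √(M * (M / (8 * Q ^ 2 : ℕ) + N / (8 * Q ^ 2 : ℕ))) :=
          norm_sum_eC_le_of_correlation_le f M (by positivity) (by positivity) (hf M rfl)
      _ ≤ N / (2 * Q) + N / (2 * Q) := add_le_add hlength hsqrt
      _ = N / Q := by field_simp; ring

/-- `A` is an admissible constant in van der Corput's `j`-th derivative test, in the weak form of a
saving by a factor `Q` as soon as `N λ` and `1 / λ` exceed `A Q ^ A`. -/
def IsVanDerCorputConst (B : ℝ) (j A : ℕ) : Prop :=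
  ∀ Q N L : ℕ, 1 ≤ Q → L ≤ N → ∀ lam : ℝ, 0 < lam →
    A * Q ^ A ≤ N * lam → A * Q ^ A * lam ≤ 1 → ∀ f : ℕ → ℝ,
      HasFwdDiffSize f j L B lam N → ‖∑ n ∈ range L, eC (f n)‖ ≤ N / Q

lemma eventually_isVanDerCorputConst_one {B : ℝ} (hB : 1 ≤ B) :
    ∀ᶠ A in atTop, IsVanDerCorputConst B 1 A := by
  filter_upwards [eventually_mul_pow_le (2 * B) 1] with A hA Q N L hQ hLN lam hlam hlow hup f hf
  have hQr : (1 : ℝ) ≤ Q := by exact_mod_cast hQ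
  have hAQ : 2 * B * Q ≤ A * Q ^ A := by simpa only [pow_one] using hA Q hQr
  have hBlam : B * lam ≤ 1 / 2 := by
    have : 2 * B * lam ≤ A * Q ^ A * lam := mul_le_mul_of_nonneg_right
      ((le_mul_of_one_le_right (by positivity) hQr).trans hAQ) hlam.le
    linarith
  refine (norm_sum_eC_le_of_hasFwdDiffSize_one hf hB hlam hBlam (by exact_mod_cast hLN)).trans ?_
  rw [div_le_div_iff₀ hlam (by positivity)]
  exact hAQ.trans hlow

lemma IsVanDerCorputConst.eventually_succ {B : ℝ} {j A₀ : ℕ} (hA₀ : IsVanDerCorputConst B j A₀) :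
    ∀ᶠ A in atTop, IsVanDerCorputConst B (j + 1) A := by
  filter_upwards [eventually_mul_pow_le (A₀ * 8 ^ (A₀ + 1)) (2 * A₀ + 2),
    eventually_mul_pow_le 16 3] with A hA hA' Q N L hQ hLN lam hlam hlow hup f hf
  have hQr : (1 : ℝ) ≤ Q := by exact_mod_cast hQ
  have hcube : 16 * (Q : ℝ) ^ 3 ≤ A * Q ^ A := hA' Q hQr
  have hAQ : A₀ * ((8 * Q ^ 2 : ℕ) : ℝ) ^ A₀ * (8 * Q ^ 2 : ℕ) ≤ A * Q ^ A :=
    le_trans (by push_cast; ring_nf; rfl) (hA Q hQr)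
  have hQ' : 0 < 8 * Q ^ 2 := by positivity
  have hAQ' : A₀ * ((8 * Q ^ 2 : ℕ) : ℝ) ^ A₀ ≤ A * Q ^ A :=
    (le_mul_of_one_le_right (by positivity) (Nat.one_le_cast.2 hQ')).trans hAQ
  have hlam₁ : lam ≤ 1 := by
    have hone : 1 ≤ A * (Q : ℝ) ^ A := by linarith [one_le_pow₀ hQr (n := 3)]
    exact (le_mul_of_one_le_left hlam.le hone).trans hup
  have hN : 16 * (Q : ℝ) ^ 3 ≤ N :=
    hcube.trans (hlow.trans (mul_le_of_le_one_right (by positivity) hlam₁))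
  refine norm_sum_eC_le_div_of_correlation_le hQ hLN hN fun M hM l d hd hld => ?_
  have hdr : (1 : ℝ) ≤ d := by exact_mod_cast hd
  have hdH : (d : ℝ) ≤ (8 * Q ^ 2 : ℕ) := by exact_mod_cast (Nat.le_add_left d l).trans hld
  subst hM
  refine hA₀ _ N M hQ' (by omega) (d * lam) (by positivity) ?_ ?_ _
    (hf.shift_sub_shift hld)
  · calc _ ≤ N * lam := hAQ'.trans hlow
      _ ≤ N * (d * lam) := by gcongr; exact le_mul_of_one_le_left hlam.le hdr
  · calc A₀ * ((8 * Q ^ 2 : ℕ) : ℝ) ^ A₀ * (d * lam)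
        ≤ A₀ * ((8 * Q ^ 2 : ℕ) : ℝ) ^ A₀ * ((8 * Q ^ 2 : ℕ) * lam) := by gcongr
      _ ≤ A * Q ^ A * lam := by rw [← mul_assoc]; gcongr
      _ ≤ 1 := hup

lemma eventually_isVanDerCorputConst {B : ℝ} (hB : 1 ≤ B) (j : ℕ) :
    ∀ᶠ A in atTop, IsVanDerCorputConst B (j + 1) A := by
  induction j with
  | zero => exact eventually_isVanDerCorputConst_one hB
  | succ j ih => exact ih.exists.elim fun _ h => h.eventually_succ

/-! ### Exponential sums along powers -/

lemma exists_fwdDiff_iter_eq {F : ℕ → ℝ → ℝ} {x : ℝ}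
    (hF : ∀ i, ∀ y, x ≤ y → HasDerivAt (F i) (F (i + 1) y) y) (j : ℕ) :
    ∃ y ∈ Set.Icc x (x + j), (Δ_[1])^[j] (F 0) x = F j y := by
  induction j generalizing F with
  | zero => exact ⟨x, by simp, rfl⟩
  | succ j ih =>
    obtain ⟨y, hy, hΔ⟩ := ih (F := fun i => Δ_[1] (F i)) fun i y hy =>
      ((hF i (y + 1) (by linarith)).comp_add_const y 1).sub (hF i y hy)
    have hderiv : ∀ z ∈ Set.Icc y (y + 1), HasDerivAt (F j) (F (j + 1) z) z := fun z hz =>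
      hF j z (hy.1.trans hz.1)
    obtain ⟨z, hz, hslope⟩ := exists_hasDerivAt_eq_slope (F j) (F (j + 1)) (lt_add_one y)
      (fun z hz => (hderiv z hz).continuousAt.continuousWithinAt)
      (fun z hz => hderiv z (Set.Ioo_subset_Icc_self hz))
    refine ⟨z, ⟨hy.1.trans hz.1.le, by push_cast; linarith [hz.2, hy.2]⟩, ?_⟩
    rw [Function.iterate_succ_apply, hΔ, hslope, add_sub_cancel_left, div_one, fwdDiff]

lemma fwdDiff_iter_comp_add_natCast (f : ℝ → ℝ) (a : ℝ) (j n : ℕ) :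
    (Δ_[1])^[j] (fun n : ℕ => f (a + n)) n = (Δ_[1])^[j] f (a + n) := by
  simp only [fwdDiff_iter_eq_sum_shift, nsmul_eq_mul, mul_one, Nat.cast_add, Nat.cast_id, add_assoc]

lemma hasDerivAt_descPochhammer_mul_rpow (k c : ℝ) (i : ℕ) {x : ℝ} (hx : 0 < x) :
    HasDerivAt (fun x => k * (descPochhammer ℝ i).eval c * x ^ (c - i))
      (k * (descPochhammer ℝ (i + 1)).eval c * x ^ (c - (i + 1 : ℕ))) x := by
  have hderiv := (Real.hasDerivAt_rpow_const (p := c - i) (Or.inl hx.ne')).const_mul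
    (k * (descPochhammer ℝ i).eval c)
  rwa [← mul_assoc, mul_assoc k, ← descPochhammer_succ_eval, sub_sub, ← Nat.cast_succ] at hderiv

lemma exists_fwdDiff_iter_mul_rpow_eq (k c : ℝ) {a : ℝ} (ha : 0 < a) (j n : ℕ) :
    ∃ y ∈ Set.Icc (a + n) (a + n + j), (Δ_[1])^[j] (fun n : ℕ => k * (a + n) ^ c) n
      = k * (descPochhammer ℝ j).eval c * y ^ (c - j) := by
  rw [fwdDiff_iter_comp_add_natCast (fun x => k * x ^ c)]
  obtain ⟨y, hy, hΔ⟩ := exists_fwdDiff_iter_eq (x := a + n)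
    (fun i y hy => hasDerivAt_descPochhammer_mul_rpow k c i
      (by linarith [(n.cast_nonneg : (0 : ℝ) ≤ n)])) j
  exact ⟨y, hy, by simpa using hΔ⟩

lemma rpow_le_four_mul_rpow {s N y : ℝ} (hs : -1 ≤ s) (hs₀ : s ≤ 0) (hN : 0 < N)
    (hy : N / 2 ≤ y) : y ^ s ≤ 4 * (2 * N) ^ s := by
  calc y ^ s ≤ (4⁻¹ * (2 * N)) ^ s :=
        Real.rpow_le_rpow_of_nonpos (by positivity) (by linarith) hs₀
    _ = 4⁻¹ ^ s * (2 * N) ^ s := Real.mul_rpow (by norm_num) (by positivity)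
    _ ≤ 4⁻¹ ^ (-1 : ℝ) * (2 * N) ^ s := by
        gcongr ?_ * _
        exact Real.rpow_le_rpow_of_exponent_ge (by norm_num) (by norm_num) hs
    _ = 4 * (2 * N) ^ s := by rw [Real.rpow_neg_one, inv_inv]

lemma hasFwdDiffSize_rpow {c k a N : ℝ} {J L : ℕ} (hJc : J < c) (hcJ : c < J + 1) (hk : 0 ≤ k)
    (hN : 0 < N) (ha : N / 2 ≤ a) (haL : a + L + J ≤ 2 * N) :
    HasFwdDiffSize (fun n : ℕ => k * (a + n) ^ c) (J + 1) L 8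
      (k * (descPochhammer ℝ (J + 1)).eval c * (2 * N) ^ (c - (J + 1))) N := by
  set p := (descPochhammer ℝ (J + 1)).eval c
  set s := c - (J + 1)
  have hp : 0 ≤ p := (descPochhammer_pos (by push_cast; linarith)).le
  have ha₀ : 0 < a := by linarith
  have hbound : ∀ (n : ℕ) {y : ℝ}, a + n ≤ y → N / 2 ≤ y ∧ y ^ s ≤ 4 * (2 * N) ^ s := fun n y hy =>
    have hNy : N / 2 ≤ y := by linarith [(n.cast_nonneg : (0 : ℝ) ≤ n)]
    ⟨hNy, rpow_le_four_mul_rpow (by linarith) (by linarith) hN hNy⟩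
  refine ⟨fun n hn => ?_, fun n _ => ?_, fun n _ => ?_⟩
  · obtain ⟨y, ⟨hay, hya⟩, hΔ⟩ := exists_fwdDiff_iter_mul_rpow_eq k c ha₀ (J + 1) n
    have hnL : (n : ℝ) + 1 ≤ L := by exact_mod_cast hn
    push_cast at hya hΔ
    have hy : 0 < y := by linarith [hbound n hay]
    rw [hΔ]
    exact mul_le_mul_of_nonneg_left
      (Real.rpow_le_rpow_of_nonpos hy (by linarith) (by linarith)) (mul_nonneg hk hp)
  · obtain ⟨y, ⟨hay, -⟩, hΔ⟩ := exists_fwdDiff_iter_mul_rpow_eq k c ha₀ (J + 1) n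
    push_cast at hΔ
    rw [hΔ]
    calc k * p * y ^ s ≤ k * p * (4 * (2 * N) ^ s) := by gcongr; exact (hbound n hay).2
      _ ≤ k * p * (8 * (2 * N) ^ s) := by gcongr; norm_num
      _ = 8 * (k * p * (2 * N) ^ s) := by ring
  · obtain ⟨y, ⟨hay, -⟩, hΔ⟩ := exists_fwdDiff_iter_mul_rpow_eq k c ha₀ (J + 1 + 1) n
    obtain ⟨hNy, hys⟩ := hbound n hay
    have hy : 0 < y := by linarith
    have hexp : c - ((J + 1 + 1 : ℕ) : ℝ) = s - 1 := by push_cast; ring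
    have hs : |c - ((J + 1 : ℕ) : ℝ)| ≤ 1 := by
      push_cast
      exact abs_le.2 ⟨by linarith, by linarith⟩
    rw [hΔ, descPochhammer_succ_eval, hexp, Real.rpow_sub_one hy.ne', abs_mul, ← mul_assoc,
      abs_mul, abs_of_nonneg (mul_nonneg hk hp), abs_of_nonneg (by positivity : 0 ≤ y ^ s / y)]
    calc k * p * |c - ((J + 1 : ℕ) : ℝ)| * (y ^ s / y)
        ≤ k * p * 1 * (4 * (2 * N) ^ s / (N / 2)) := by gcongr
      _ = 8 * (k * p * (2 * N) ^ s) / N := by field_simp; ring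

lemma norm_sum_rpow_le_of_isVanDerCorputConst {c k lam : ℝ} {J A Q N : ℕ}
    (hA : IsVanDerCorputConst 8 (J + 1) A) (hJc : J < c) (hcJ : c < J + 1) (hk : 0 < k)
    (hQ : 1 ≤ Q) (hJN : J + 1 ≤ N)
    (hlam : lam = k * (descPochhammer ℝ (J + 1)).eval c * (2 * N) ^ (c - (J + 1)))
    (hlow : A * Q ^ A ≤ N * lam) (hup : A * Q ^ A * lam ≤ 1) :
    ‖∑ n ∈ Ico (N / 2 + 1) (N + 1), eC (k * (n : ℝ) ^ c)‖ ≤ N / Q := by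
  have hN : (0 : ℝ) < N := by exact_mod_cast (by omega : 0 < N)
  have hp : 0 < (descPochhammer ℝ (J + 1)).eval c := descPochhammer_pos (by push_cast; linarith)
  set a := N / 2 + 1
  have ha : (N : ℝ) / 2 ≤ a := by
    have : (N : ℝ) ≤ 2 * a := by exact_mod_cast (by omega : N ≤ 2 * a)
    linarith
  have haL : (a : ℝ) + (N + 1 - a : ℕ) + J ≤ 2 * N := by
    exact_mod_cast (by omega : a + (N + 1 - a) + J ≤ 2 * N)
  have hsize := hasFwdDiffSize_rpow hJc hcJ hk.le hN ha haL
  rw [← hlam] at hsize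
  simp_rw [Finset.sum_Ico_eq_sum_range, Nat.cast_add]
  exact hA Q N _ hQ (by omega) lam (by rw [hlam]; positivity) hlow hup _ hsize

/-- Since `c` is not an integer, the `(⌊c⌋ + 1)`-st derivative of `k x ^ c` has size `k N ^ (θ - 1)`
with `0 < θ < 1`: it tends to zero, but more slowly than `1 / N`. -/
lemma eventually_norm_sum_rpow_le {c : ℝ} (hc : 0 < c) (hint : ∀ k : ℤ, c ≠ k) :
    ∀ᶠ A : ℕ in atTop, ∀ R N k : ℕ, 1 ≤ k → k ≤ R → (A : ℝ) * R ^ A ≤ N →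
      ‖∑ n ∈ Ico (N / 2 + 1) (N + 1), eC (k * (n : ℝ) ^ c)‖ ≤ N / R := by
  set J := ⌊c⌋₊
  have hJc : (J : ℝ) < c := (Nat.floor_le hc.le).lt_of_ne fun h =>
    hint J (by rw [Int.cast_natCast]; exact h.symm)
  have hcJ : c < J + 1 := Nat.lt_floor_add_one c
  set p := (descPochhammer ℝ (J + 1)).eval c
  have hp : 0 < p := descPochhammer_pos (by push_cast; linarith)
  obtain ⟨A₀, hA₀⟩ :=
    (eventually_isVanDerCorputConst (by norm_num : (1 : ℝ) ≤ 8) J).exists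
  filter_upwards [eventually_mul_pow_le (J + 1) 0,
    eventually_mul_pow_le_rpow (2 * A₀ / p) A₀ (by linarith : 0 < c - J),
    eventually_mul_pow_le_rpow (A₀ * p) (A₀ + 1) (by linarith : 0 < J + 1 - c)]
    with A hlarge hθ hθ' R N k hk hkR hN
  have hkr : (1 : ℝ) ≤ k := by exact_mod_cast hk
  have hkR' : (k : ℝ) ≤ R := by exact_mod_cast hkR
  have hR : (1 : ℝ) ≤ R := hkr.trans hkR'
  have hJN : J + 1 ≤ N := by
    exact_mod_cast (by simpa using (hlarge R hR).trans hN : (J : ℝ) + 1 ≤ N)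
  have hN₀ : (0 : ℝ) < N := by exact_mod_cast (by omega : 0 < N)
  specialize hθ R N hR hN
  specialize hθ' R N hR hN
  refine norm_sum_rpow_le_of_isVanDerCorputConst hA₀ hJc hcJ (zero_lt_one.trans_le hkr)
    (hk.trans hkR) hJN rfl ?_ ?_
  · have hrpow : (N : ℝ) * (2 * N) ^ (c - (J + 1)) = (2 * N) ^ (c - J) / 2 := by
      rw [← sub_sub, Real.rpow_sub_one (by positivity)]
      field_simp
    rw [div_mul_eq_mul_div, div_le_iff₀ hp] at hθ
    calc (A₀ : ℝ) * R ^ A₀ ≤ 1 * p * ((N : ℝ) ^ (c - J) / 2) := by linarith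
      _ ≤ k * p * ((2 * N) ^ (c - J) / 2) := by gcongr; linarith
      _ = N * (k * p * (2 * N) ^ (c - (J + 1))) := by rw [← hrpow]; ring
  · have hrpow : (2 * N : ℝ) ^ (c - (J + 1)) ≤ ((N : ℝ) ^ (J + 1 - c))⁻¹ := by
      rw [← Real.rpow_neg hN₀.le, neg_sub]
      exact Real.rpow_le_rpow_of_nonpos hN₀ (by linarith) (by linarith)
    calc A₀ * (R : ℝ) ^ A₀ * (k * p * (2 * N) ^ (c - (J + 1)))
        ≤ A₀ * R ^ A₀ * (R * p * ((N : ℝ) ^ (J + 1 - c))⁻¹) := by gcongr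
      _ = A₀ * p * R ^ (A₀ + 1) / (N : ℝ) ^ (J + 1 - c) := by ring
      _ ≤ 1 := div_le_one_of_le₀ hθ' (by positivity)

/-! ### The Fejér kernel and Fejér interpolation -/

/-- The Fejér kernel, normalised so that `fejerKernel K 0 = 1`. -/
def fejerKernel (K : ℕ) (t : ℝ) : ℝ := ‖∑ j ∈ range K, eC (j * t)‖ ^ 2 / K ^ 2

lemma fejerKernel_nonneg (K : ℕ) (t : ℝ) : 0 ≤ fejerKernel K t := by
  rw [fejerKernel]
  positivity

lemma fejerKernel_sub_intCast (K : ℕ) (t : ℝ) (z : ℤ) :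
    fejerKernel K (t - z) = fejerKernel K t := by
  have hperiod : ∀ j : ℕ, eC (j * (t - z)) = eC (j * t) := fun j => by
    rw [← eC_sub_intCast (j * t) (j * z), mul_sub]
    push_cast
    rfl
  simp_rw [fejerKernel, hperiod]

lemma inv_four_le_fejerKernel {K : ℕ} (hK : 0 < K) {t : ℝ} (ht : |t - round t| ≤ 1 / (8 * K)) :
    4⁻¹ ≤ fejerKernel K t := by
  rw [← fejerKernel_sub_intCast K t (round t), fejerKernel]
  set y := t - round t
  have hterm : ∀ j ∈ range K, (2⁻¹ : ℝ) ≤ (eC (j * y)).re := fun j hj => by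
    have hjK : (j : ℝ) ≤ K := by exact_mod_cast (mem_range.1 hj).le
    have hcos : (eC (j * y)).re = Real.cos (2 * Real.pi * (j * y)) := by
      rw [← Complex.exp_ofReal_mul_I_re, eC]
      congr 2
      push_cast
      ring
    have hangle : |2 * Real.pi * (j * y)| ≤ 1 := by
      calc |2 * Real.pi * (j * y)| = 2 * Real.pi * (j * |y|) := by
            rw [abs_mul, abs_of_pos Real.two_pi_pos, abs_mul, Nat.abs_cast]
        _ ≤ 2 * 4 * (K * (1 / (8 * K))) := by
            gcongr
            exact Real.pi_le_four
        _ = 1 := by field_simp; norm_num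
    rw [hcos]
    linarith [Real.one_sub_sq_div_two_le_cos (x := 2 * Real.pi * (j * y)),
      (sq_le_one_iff_abs_le_one _).2 hangle]
  have hre : (K : ℝ) / 2 ≤ ‖∑ j ∈ range K, eC (j * y)‖ := by
    calc (K : ℝ) / 2 = #(range K) • (2⁻¹ : ℝ) := by rw [card_range, nsmul_eq_mul, div_eq_mul_inv]
      _ ≤ ∑ j ∈ range K, (eC (j * y)).re := card_nsmul_le_sum _ _ _ hterm
      _ = (∑ j ∈ range K, eC (j * y)).re := (Complex.re_sum _ _).symm
      _ ≤ ‖∑ j ∈ range K, eC (j * y)‖ := Complex.re_le_norm _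
  rw [le_div_iff₀ (by positivity)]
  calc 4⁻¹ * (K : ℝ) ^ 2 = (K / 2 : ℝ) ^ 2 := by ring
    _ ≤ _ := by gcongr

lemma fejerKernel_le {K : ℕ} {t η : ℝ} (hη : 0 < η) (ht : η ≤ |t - round t|) :
    fejerKernel K t ≤ 1 / (4 * η ^ 2 * K ^ 2) := by
  have hlow : 4 * η ≤ ‖eC t - 1‖ := by linarith [four_mul_abs_sub_round_le_norm_eC_sub_one t]
  have hne : eC t ≠ 1 := sub_ne_zero.1 (norm_pos_iff.1 (lt_of_lt_of_le (by positivity) hlow))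
  have hgeom : ‖∑ j ∈ range K, eC (j * t)‖ ≤ 1 / (2 * η) := by
    simp_rw [eC_nat_mul]
    rw [geom_sum_eq hne, norm_div, ← eC_nat_mul]
    calc ‖eC (K * t) - 1‖ / ‖eC t - 1‖ ≤ (1 + 1) / (4 * η) := by
          gcongr
          exact (norm_sub_le _ _).trans_eq (by rw [norm_eC, norm_one])
      _ = 1 / (2 * η) := by field_simp; norm_num
  calc fejerKernel K t ≤ (1 / (2 * η)) ^ 2 / K ^ 2 := by
        rw [fejerKernel]
        gcongr
    _ = 1 / (4 * η ^ 2 * K ^ 2) := by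
        rw [div_pow, div_div, mul_pow]
        norm_num

lemma sum_range_eC_mul_div_eq_zero {K : ℕ} {z : ℤ} (hz : ¬ (K : ℤ) ∣ z) :
    ∑ q ∈ range K, eC (q * (z / K)) = 0 := by
  rcases K.eq_zero_or_pos with rfl | hK
  · rw [range_zero, sum_empty]
  have hKr : (K : ℝ) ≠ 0 := by exact_mod_cast hK.ne'
  have hne : eC (z / K) ≠ 1 := fun h => by
    obtain ⟨k, hk⟩ := eC_eq_one_iff.1 h
    rw [div_eq_iff hKr, mul_comm] at hk
    exact hz ⟨k, by exact_mod_cast hk⟩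
  simp_rw [eC_nat_mul]
  rw [geom_sum_eq hne, ← eC_nat_mul, mul_div_cancel₀ _ hKr, eC_intCast, sub_self, zero_div]

lemma sum_range_fejerKernel {K : ℕ} (hK : 0 < K) (t : ℝ) :
    ∑ q ∈ range K, fejerKernel K (t - q / K) = 1 := by
  have horth := abs_sum_sq_norm_sum_eC_sub_le (range K) (range K)
    (fun j q => j * (t - q / K)) le_rfl fun l _ h hh hlh => by
      have hfactor : ∀ q : ℕ, eC (h * (t - q / K) - l * (t - q / K))
          = eC ((h - l) * t) * eC (q * ((l - h : ℤ) / K)) := fun q => by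
        rw [← eC_add]
        congr 1
        push_cast
        ring
      have hdvd : ¬ (K : ℤ) ∣ l - h := fun hdvd => by
        have := mem_range.1 hh
        have := Int.le_of_dvd (by omega) ((dvd_neg).2 hdvd)
        omega
      simp_rw [hfactor]
      rw [← Finset.mul_sum, sum_range_eC_mul_div_eq_zero hdvd, mul_zero, norm_zero]
  rw [mul_zero, card_range, abs_nonpos_iff, sub_eq_zero] at horth
  simp_rw [fejerKernel]
  rw [← Finset.sum_div, horth, ← sq, div_self (by positivity)]

/-- The interpolant of the `1`-periodic extension of `φ` from `[0, 1)` at the nodes `q / K`: the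
nonnegativity of the Fejér kernel makes it stable, at the price of being a trigonometric polynomial
of degree `K - 1` rather than `K / 2`. -/
def fejerInterp (K : ℕ) (φ : ℝ → ℂ) (t : ℝ) : ℂ :=
  ∑ q ∈ range K, (fejerKernel K (t - q / K) : ℂ) * φ (q / K)

lemma norm_fejerInterp_le_one {K : ℕ} (hK : 0 < K) {φ : ℝ → ℂ} (hφ : ∀ x, ‖φ x‖ ≤ 1) (t : ℝ) :
    ‖fejerInterp K φ t‖ ≤ 1 := by
  rw [← sum_range_fejerKernel hK t]
  refine norm_sum_le_of_le _ fun q _ => ?_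
  rw [norm_mul, Complex.norm_real, Real.norm_of_nonneg (fejerKernel_nonneg _ _)]
  exact mul_le_of_le_one_right (fejerKernel_nonneg _ _) (hφ _)

lemma fejerKernel_eq_sum (K : ℕ) (t : ℝ) :
    (fejerKernel K t : ℂ) = ∑ p ∈ range K ×ˢ range K, eC ((p.1 - p.2) * t) / K ^ 2 := by
  rw [fejerKernel, Complex.ofReal_div, sq_norm_sum_eC, Finset.sum_product, Finset.sum_div]
  simp_rw [Finset.sum_div, sub_mul]
  push_cast
  rfl

lemma exists_fejerInterp_eq_sum (K : ℕ) {φ : ℝ → ℂ} (hφ : ∀ x, ‖φ x‖ ≤ 1) :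
    ∃ a : ℕ × ℕ → ℂ, (∀ p, ‖a p‖ ≤ 1 / K) ∧ ∀ t : ℝ, fejerInterp K φ t
      = ∑ p ∈ range K ×ˢ range K, a p * eC ((p.1 - p.2) * t) := by
  refine ⟨fun p => ∑ q ∈ range K, eC (-((p.1 - p.2) * (q / K))) * φ (q / K) / K ^ 2,
    fun p => ?_, fun t => ?_⟩
  · calc _ ≤ ∑ _q ∈ range K, 1 / (K : ℝ) ^ 2 := norm_sum_le_of_le _ fun q _ => by
          rw [norm_div, norm_mul, norm_eC, one_mul, norm_pow, Complex.norm_natCast]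
          gcongr
          exact hφ _
      _ = 1 / K := by
          rw [sum_const, card_range, nsmul_eq_mul]
          rcases K.eq_zero_or_pos with rfl | hK
          · simp
          · field_simp
  · simp_rw [fejerInterp, fejerKernel_eq_sum, Finset.sum_mul]
    rw [Finset.sum_comm]
    refine Finset.sum_congr rfl fun p _ => Finset.sum_congr rfl fun q _ => ?_
    rw [mul_sub, sub_eq_add_neg, eC_add]
    ring

/-- Nodes within `η` of `{t}` contribute `O(η)` by the Lipschitz condition; the others are at
distance at least `η` from `{t}` modulo `1` as well, because `{t}` is that far from `0` and `1`. -/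
lemma norm_sub_fejerInterp_le {K : ℕ} (hK : 0 < K) {φ : ℝ → ℂ} {C : ℝ≥0}
    (hφ : LipschitzOnWith C φ (Set.Ico 0 1)) {t η : ℝ} (hη : 0 < η) (ht : η ≤ |t - round t|) :
    ‖φ (Int.fract t) - fejerInterp K φ t‖ ≤ C * (η + 1 / (4 * η ^ 2 * K)) := by
  have hKr : (0 : ℝ) < K := by exact_mod_cast hK
  set s := Int.fract t
  set w : ℕ → ℝ := fun q => fejerKernel K (s - q / K)
  have hw : ∀ q : ℕ, fejerKernel K (t - q / K) = w q := fun q => by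
    rw [← fejerKernel_sub_intCast K (t - q / K) ⌊t⌋, sub_right_comm, Int.self_sub_floor]
  have hsum : ∑ q ∈ range K, w q = 1 := sum_range_fejerKernel hK s
  have hs : s ∈ Set.Ico 0 1 := ⟨Int.fract_nonneg t, Int.fract_lt_one t⟩
  obtain ⟨hηs, hηs'⟩ := le_min_iff.1 (ht.trans_eq (abs_sub_round_eq_min t))
  have hterm : ∀ q ∈ range K, ‖(w q : ℂ) * (φ s - φ (q / K))‖
      ≤ C * (η * w q + 1 / (4 * η ^ 2 * K ^ 2)) := fun q hq => by
    have hnode : (q : ℝ) / K ∈ Set.Ico 0 1 :=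
      ⟨by positivity, (div_lt_one hKr).2 (by exact_mod_cast mem_range.1 hq)⟩
    have hdist : |s - q / K| ≤ 1 - η :=
      abs_le.2 ⟨by linarith [hnode.2], by linarith [hnode.1]⟩
    have hw₀ : 0 ≤ w q := fejerKernel_nonneg _ _
    have hweight : w q * |s - q / K| ≤ η * w q + 1 / (4 * η ^ 2 * K ^ 2) := by
      rcases le_total |s - q / K| η with hnear | hfar
      · rw [mul_comm]
        exact le_add_of_le_of_nonneg (by gcongr) (by positivity)
      · exact le_add_of_nonneg_of_le (by positivity)
          ((mul_le_of_le_one_right hw₀ (by linarith)).trans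
            (fejerKernel_le hη (le_abs_sub_round hfar hdist)))
    calc ‖(w q : ℂ) * (φ s - φ (q / K))‖ ≤ w q * (C * |s - q / K|) := by
          rw [norm_mul, Complex.norm_real, Real.norm_of_nonneg hw₀]
          gcongr
          exact hφ.norm_sub_le hs hnode
      _ = C * (w q * |s - q / K|) := mul_left_comm _ _ _
      _ ≤ C * (η * w q + 1 / (4 * η ^ 2 * K ^ 2)) := by gcongr
  have hdiff : φ s - fejerInterp K φ t = ∑ q ∈ range K, (w q : ℂ) * (φ s - φ (q / K)) := by
    simp_rw [fejerInterp, hw, mul_sub, Finset.sum_sub_distrib]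
    rw [← Finset.sum_mul, ← Complex.ofReal_sum, hsum, Complex.ofReal_one, one_mul]
  rw [hdiff]
  refine (norm_sum_le_of_le _ hterm).trans_eq ?_
  rw [← Finset.mul_sum, Finset.sum_add_distrib, ← Finset.mul_sum, hsum, sum_const, card_range,
    nsmul_eq_mul]
  field_simp

lemma lipschitzWith_eC_neg_mul {ξ : ℝ} (hξ : |ξ| ≤ 1 / 2) :
    LipschitzWith NNReal.pi fun x => eC (-(ξ * x)) := by
  refine LipschitzWith.of_dist_le_mul fun x y => ?_
  rw [dist_eq_norm, Real.dist_eq, NNReal.coe_real_pi]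
  calc ‖eC (-(ξ * x)) - eC (-(ξ * y))‖ ≤ 2 * Real.pi * |-(ξ * x) - -(ξ * y)| := norm_eC_sub_le _ _
    _ = 2 * Real.pi * (|ξ| * |x - y|) := by rw [neg_sub_neg, ← mul_sub, abs_mul, abs_sub_comm]
    _ ≤ 2 * Real.pi * (1 / 2 * |x - y|) := by gcongr
    _ = Real.pi * |x - y| := by ring

/-! ### Points near integers -/

section

variable {α : Type*} {T : Finset α} {x : α → ℝ} {R : ℕ} {N : ℝ}

lemma sum_fejerKernel_le (hR : 0 < R) (hT : #T ≤ N)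
    (hx : ∀ k : ℕ, 1 ≤ k → k ≤ R → ‖∑ n ∈ T, eC (k * x n)‖ ≤ N / R) :
    ∑ n ∈ T, fejerKernel R (x n) ≤ 2 * N / R := by
  have hN : 0 ≤ N := (#T).cast_nonneg.trans hT
  have horth := abs_sum_sq_norm_sum_eC_sub_le T (range R) (fun j n => j * x n)
    (by positivity : 0 ≤ N / R) fun l _ h hh hlh => by
      have := mem_range.1 hh
      have hcorr := hx (h - l) (by omega) (by omega)
      simpa only [Nat.cast_sub hlh.le, sub_mul] using hcorr
  have hRT : R * (#T : ℝ) ≤ R * N := by gcongr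
  simp_rw [fejerKernel]
  rw [← Finset.sum_div, div_le_iff₀ (by positivity)]
  rw [card_range] at horth
  calc ∑ n ∈ T, ‖∑ j ∈ range R, eC (j * x n)‖ ^ 2 ≤ R * N + R ^ 2 * (N / R) := by
        linarith [(abs_le.1 horth).2]
    _ = 2 * N / R * R ^ 2 := by field_simp; norm_num

lemma card_abs_sub_round_lt_le (hR : 0 < R) (hT : #T ≤ N)
    (hx : ∀ k : ℕ, 1 ≤ k → k ≤ R → ‖∑ n ∈ T, eC (k * x n)‖ ≤ N / R) :
    (#{n ∈ T | |x n - round (x n)| < 1 / (8 * R)} : ℝ) ≤ 8 * N / R := by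
  have hcount : #{n ∈ T | |x n - round (x n)| < 1 / (8 * R)} • (4⁻¹ : ℝ)
      ≤ ∑ n ∈ T, fejerKernel R (x n) :=
    (card_nsmul_le_sum _ _ _ fun n hn => inv_four_le_fejerKernel hR (mem_filter.1 hn).2.le).trans
      (sum_le_sum_of_subset_of_nonneg (filter_subset _ _) fun n _ _ => fejerKernel_nonneg _ _)
  rw [nsmul_eq_mul] at hcount
  have hsum := hcount.trans (sum_fejerKernel_le hR hT hx)
  rw [mul_div_assoc] at hsum ⊢
  linarith

/-- Points near an integer contribute at most `2` each but are few, the others `O(1 / R)` each. -/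
lemma sum_norm_sub_fejerInterp_le (hR : 0 < R) (hT : #T ≤ N)
    (hx : ∀ k : ℕ, 1 ≤ k → k ≤ R → ‖∑ n ∈ T, eC (k * x n)‖ ≤ N / R) {ξ : ℝ} (hξ : |ξ| ≤ 1 / 2) :
    ∑ n ∈ T, ‖eC (-(ξ * Int.fract (x n))) - fejerInterp (16 * R ^ 3) (fun y => eC (-(ξ * y))) (x n)‖
      ≤ 20 * N / R := by
  have hK : 0 < 16 * R ^ 3 := by positivity
  have hterm : ∀ n ∈ T,
      ‖eC (-(ξ * Int.fract (x n))) - fejerInterp (16 * R ^ 3) (fun y => eC (-(ξ * y))) (x n)‖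
        ≤ 4 / R + if |x n - round (x n)| < 1 / (8 * R) then 2 else 0 := fun n _ => by
    split_ifs with hnear
    · calc _ ≤ ‖eC (-(ξ * Int.fract (x n)))‖
            + ‖fejerInterp (16 * R ^ 3) (fun y => eC (-(ξ * y))) (x n)‖ := norm_sub_le _ _
        _ ≤ 1 + 1 := add_le_add (norm_eC _).le
            (norm_fejerInterp_le_one hK (fun _ => (norm_eC _).le) _)
        _ ≤ 4 / R + 2 := by linarith [(by positivity : (0 : ℝ) ≤ 4 / R)]
    · refine (norm_sub_fejerInterp_le hK (lipschitzWith_eC_neg_mul hξ).lipschitzOnWith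
        (by positivity) (not_lt.1 hnear)).trans ?_
      have hπ : Real.pi * (9 / 8) ≤ 4 := by linarith [Real.pi_lt_d2]
      calc _ = Real.pi * (9 / 8) / R := by
            rw [NNReal.coe_real_pi]
            push_cast
            field_simp
            norm_num
        _ ≤ 4 / R + 0 := by rw [add_zero]; gcongr
  calc _ ≤ #T * (4 / R : ℝ) + #{n ∈ T | |x n - round (x n)| < 1 / (8 * R)} * (2 : ℝ) := by
        refine (sum_le_sum hterm).trans_eq ?_
        rw [sum_add_distrib, ← sum_filter, sum_const, sum_const, nsmul_eq_mul, nsmul_eq_mul]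
    _ ≤ N * (4 / R) + 8 * N / R * 2 := by
        gcongr
        exact card_abs_sub_round_lt_le hR hT hx
    _ = 20 * N / R := by ring

end

/-! ### Removal of the floor -/

lemma norm_prod_sub_prod_le {ι A : Type*} [NormedCommRing A] [NormOneClass A] (s : Finset ι)
    {a b : ι → A} (ha : ∀ i ∈ s, ‖a i‖ ≤ 1) (hb : ∀ i ∈ s, ‖b i‖ ≤ 1) :
    ‖∏ i ∈ s, a i - ∏ i ∈ s, b i‖ ≤ ∑ i ∈ s, ‖a i - b i‖ := by
  classical
  induction s using Finset.induction_on with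
  | empty => simp only [prod_empty, sub_self, norm_zero, sum_empty, le_refl]
  | insert j s hj ih =>
    rw [forall_mem_insert] at ha hb
    have hprod : ‖∏ i ∈ s, b i‖ ≤ 1 :=
      (norm_prod_le s b).trans (prod_le_one (fun _ _ => norm_nonneg _) hb.2)
    rw [prod_insert hj, prod_insert hj, sum_insert hj]
    calc ‖a j * ∏ i ∈ s, a i - b j * ∏ i ∈ s, b i‖
        = ‖(a j - b j) * ∏ i ∈ s, b i + a j * (∏ i ∈ s, a i - ∏ i ∈ s, b i)‖ := by ring_nf
      _ ≤ ‖a j - b j‖ * ‖∏ i ∈ s, b i‖ + ‖a j‖ * ‖∏ i ∈ s, a i - ∏ i ∈ s, b i‖ :=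
          (norm_add_le _ _).trans (add_le_add (norm_mul_le _ _) (norm_mul_le _ _))
      _ ≤ ‖a j - b j‖ * 1 + 1 * ∑ i ∈ s, ‖a i - b i‖ := by
          gcongr
          exacts [ha.1, ih ha.2 hb.2]
      _ = ‖a j - b j‖ + ∑ i ∈ s, ‖a i - b i‖ := by rw [mul_one, one_mul]

section

variable {ι α : Type*} [Fintype ι] (T : Finset α) (ξ : ι → ℝ)

lemma exists_prod_fejerInterp_eq_sum [DecidableEq ι] (K : ℕ) {φ : ι → ℝ → ℂ}
    (hφ : ∀ i y, ‖φ i y‖ ≤ 1) :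
    ∃ a : (ι → ℕ × ℕ) → ℂ, (∀ p, ‖a p‖ ≤ (1 / K) ^ Fintype.card ι) ∧ ∀ y : ι → ℝ,
      ∏ i, fejerInterp K (φ i) (y i) = ∑ p ∈ Fintype.piFinset fun _ => range K ×ˢ range K,
        a p * eC (∑ i, ((p i).1 - (p i).2) * y i) := by
  choose a ha hφa using fun i => exists_fejerInterp_eq_sum K (hφ i)
  refine ⟨fun p => ∏ i, a i (p i), fun p => ?_, fun y => ?_⟩
  · rw [norm_prod]
    exact (prod_le_prod (fun _ _ => norm_nonneg _) fun i _ => ha i (p i)).trans_eq (prod_const _)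
  · simp_rw [hφa, Finset.prod_univ_sum, Finset.prod_mul_distrib, eC_sum]

/-- Expanding the product gives `K ^ (2 * card ι)` shifted exponential sums, each with a coefficient
of size at most `K ^ (-card ι)`; the shift whose sum is largest will do. -/
lemma exists_shift_norm_sum_mul_fejerInterp_le {K : ℕ} (hK : 0 < K) {φ : ι → ℝ → ℂ}
    (hφ : ∀ i y, ‖φ i y‖ ≤ 1) (x : ι → α → ℝ) :
    ∃ k : ι → ℤ, (∀ i, |(k i : ℝ)| ≤ K) ∧
      ‖∑ n ∈ T, eC (∑ i, ξ i * x i n) * ∏ i, fejerInterp K (φ i) (x i n)‖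
        ≤ K ^ Fintype.card ι * ‖∑ n ∈ T, eC (∑ i, (ξ i + k i) * x i n)‖ := by
  classical
  obtain ⟨a, ha, hprod⟩ := exists_prod_fejerInterp_eq_sum K hφ
  set P := Fintype.piFinset fun _ : ι => range K ×ˢ range K with hP
  set S : (ι → ℕ × ℕ) → ℂ := fun p => ∑ n ∈ T, eC (∑ i, (ξ i + ((p i).1 - (p i).2)) * x i n)
    with hS
  have hexpand : ∑ n ∈ T, eC (∑ i, ξ i * x i n) * ∏ i, fejerInterp K (φ i) (x i n)
      = ∑ p ∈ P, a p * S p := by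
    simp_rw [hS, Finset.mul_sum]
    rw [Finset.sum_comm]
    refine Finset.sum_congr rfl fun n _ => ?_
    simp_rw [hprod fun i => x i n, Finset.mul_sum, add_mul, Finset.sum_add_distrib, eC_add,
      mul_left_comm]
  have hne : P.Nonempty := Fintype.piFinset_nonempty.2 fun _ =>
    (nonempty_range_iff.2 hK.ne').product (nonempty_range_iff.2 hK.ne')
  obtain ⟨p, hp, hmax⟩ := exists_max_image P (fun p => ‖S p‖) hne
  refine ⟨fun i => (p i).1 - (p i).2, fun i => ?_, ?_⟩
  · obtain ⟨hfst, hsnd⟩ := mem_product.1 (Fintype.mem_piFinset.1 hp i)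
    rw [mem_range] at hfst hsnd
    exact_mod_cast abs_le.2 (by omega : -(K : ℤ) ≤ (p i).1 - (p i).2 ∧ ((p i).1 - (p i).2 : ℤ) ≤ K)
  push_cast
  calc _ ≤ ∑ _q ∈ P, (1 / K : ℝ) ^ Fintype.card ι * ‖S p‖ := by
        rw [hexpand]
        refine norm_sum_le_of_le _ fun q hq => ?_
        rw [norm_mul]
        gcongr
        exacts [ha q, hmax q hq]
    _ = ((K * K) * (1 / K : ℝ)) ^ Fintype.card ι * ‖S p‖ := by
        rw [sum_const, hP, Fintype.card_piFinset, prod_const, card_product, card_range, card_univ,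
          nsmul_eq_mul]
        push_cast
        ring
    _ = K ^ Fintype.card ι * ‖S p‖ := by
        congr 2
        field_simp

variable {T ξ} {x : ι → α → ℝ} {R : ℕ} {N : ℝ}

lemma norm_sum_floor_sub_le (hR : 0 < R) (hT : #T ≤ N)
    (hx : ∀ i, ∀ k : ℕ, 1 ≤ k → k ≤ R → ‖∑ n ∈ T, eC (k * x i n)‖ ≤ N / R)
    (hξ : ∀ i, |ξ i| ≤ 1 / 2) :
    ‖∑ n ∈ T, eC (∑ i, ξ i * (⌊x i n⌋ : ℝ)) - ∑ n ∈ T, eC (∑ i, ξ i * x i n)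
        * ∏ i, fejerInterp (16 * R ^ 3) (fun y => eC (-(ξ i * y))) (x i n)‖
      ≤ 20 * Fintype.card ι * N / R := by
  have hfloor : ∀ n, eC (∑ i, ξ i * (⌊x i n⌋ : ℝ))
      = eC (∑ i, ξ i * x i n) * ∏ i, eC (-(ξ i * Int.fract (x i n))) := fun n => by
    rw [← eC_sum, ← eC_add, ← Finset.sum_add_distrib]
    simp_rw [← sub_eq_add_neg, ← mul_sub, Int.self_sub_fract]
  simp_rw [hfloor]
  rw [← Finset.sum_sub_distrib]
  calc _ ≤ ∑ n ∈ T, ∑ i, ‖eC (-(ξ i * Int.fract (x i n)))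
          - fejerInterp (16 * R ^ 3) (fun y => eC (-(ξ i * y))) (x i n)‖ := by
        refine norm_sum_le_of_le _ fun n _ => ?_
        rw [← mul_sub, norm_mul, norm_eC, one_mul]
        exact norm_prod_sub_prod_le _ (fun _ _ => (norm_eC _).le) fun _ _ =>
          norm_fejerInterp_le_one (by positivity) (fun _ => (norm_eC _).le) _
    _ ≤ ∑ _i : ι, 20 * N / R := by
        rw [Finset.sum_comm]
        exact sum_le_sum fun i _ => sum_norm_sub_fejerInterp_le hR hT (hx i) (hξ i)
    _ = 20 * Fintype.card ι * N / R := by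
        rw [sum_const, card_univ, nsmul_eq_mul]
        ring

lemma exists_shift_norm_sum_floor_le (hR : 0 < R) (hT : #T ≤ N)
    (hx : ∀ i, ∀ k : ℕ, 1 ≤ k → k ≤ R → ‖∑ n ∈ T, eC (k * x i n)‖ ≤ N / R)
    (hξ : ∀ i, |ξ i| ≤ 1 / 2) :
    ∃ k : ι → ℤ, (∀ i, |(k i : ℝ)| ≤ 16 * R ^ 3) ∧
      ‖∑ n ∈ T, eC (∑ i, ξ i * (⌊x i n⌋ : ℝ))‖
        ≤ (16 * R ^ 3) ^ Fintype.card ι * ‖∑ n ∈ T, eC (∑ i, (ξ i + k i) * x i n)‖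
          + 20 * Fintype.card ι * N / R := by
  obtain ⟨k, hk, hlarge⟩ := exists_shift_norm_sum_mul_fejerInterp_le T ξ
    (by positivity : 0 < 16 * R ^ 3) (φ := fun i y => eC (-(ξ i * y))) (fun _ _ => (norm_eC _).le) x
  push_cast at hk hlarge
  exact ⟨k, hk, (norm_le_norm_add_norm_sub' _ _).trans
    (add_le_add hlarge (norm_sum_floor_sub_le hR hT hx hξ))⟩

end

lemma sum_Icc_upper_half {M : Type*} [AddCommMonoid M] (N : ℕ) (g : ℕ → M) :
    (∑ n ∈ Icc 1 N, if N < 2 * n then g n else 0) = ∑ n ∈ Ico (N / 2 + 1) (N + 1), g n := by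
  rw [← sum_filter]
  congr 1
  ext n
  simp only [mem_filter, mem_Icc, mem_Ico]
  omega

lemma eventually_exists_shift_norm_mean_floor_le {ι : Type*} [Fintype ι] {c : ι → ℝ}
    (hpos : ∀ i, 0 < c i) (hint : ∀ i, ∀ k : ℤ, c i ≠ k) :
    ∀ᶠ A : ℕ in atTop, ∀ R N : ℕ, 0 < R → (A : ℝ) * R ^ A ≤ N →
      ∀ ξ : ι → ℝ, (∀ i, |ξ i| ≤ 1 / 2) → ∃ k : ι → ℤ, (∀ i, |(k i : ℝ)| ≤ 16 * R ^ 3) ∧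
        ‖(N : ℂ)⁻¹ * ∑ n ∈ Icc 1 N,
            if N < 2 * n then eC (∑ i, ξ i * (⌊(n : ℝ) ^ c i⌋ : ℝ)) else 0‖
          ≤ (16 * R ^ 3) ^ Fintype.card ι * ‖(N : ℂ)⁻¹ * ∑ n ∈ Icc 1 N,
              if N < 2 * n then eC (∑ i, (ξ i + k i) * (n : ℝ) ^ c i) else 0‖
            + 20 * Fintype.card ι / R := by
  filter_upwards [eventually_all.2 fun i => eventually_norm_sum_rpow_le (hpos i) (hint i),
    eventually_ge_atTop 1] with A hsum hA R N hR hAR ξ hξ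
  have hN : 0 < (N : ℝ) := lt_of_lt_of_le (by positivity) hAR
  have hcard : (#(Ico (N / 2 + 1) (N + 1)) : ℝ) ≤ N := by
    rw [Nat.card_Ico]
    exact_mod_cast (by omega : N + 1 - (N / 2 + 1) ≤ N)
  obtain ⟨k, hk, hle⟩ := exists_shift_norm_sum_floor_le
    (x := fun i (n : ℕ) => (n : ℝ) ^ c i) hR hcard (fun i j hj hjR => hsum i R N j hj hjR hAR) hξ
  refine ⟨k, hk, ?_⟩
  simp_rw [sum_Icc_upper_half, norm_mul, norm_inv, Complex.norm_natCast]
  rw [inv_mul_le_iff₀ hN]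
  refine hle.trans_eq ?_
  field_simp

lemma eventually_mul_natCeil_div_pow_le {X D : ℝ} (hX : 0 ≤ X) (hD : 0 ≤ D) (e : ℕ) :
    ∀ᶠ C : ℕ in atTop, ∀ δ : ℝ, 0 < δ → δ ≤ 1 → X * ⌈D / δ⌉₊ ^ e ≤ C * δ ^ (-C : ℝ) := by
  filter_upwards [eventually_mul_pow_le (X * (D + 1) ^ e) e] with C hC δ hδ hδ₁
  have hδ' : 1 ≤ δ⁻¹ := (one_le_inv₀ hδ).2 hδ₁
  have hceil : (⌈D / δ⌉₊ : ℝ) ≤ (D + 1) * δ⁻¹ := by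
    calc (⌈D / δ⌉₊ : ℝ) ≤ D / δ + 1 := (Nat.ceil_lt_add_one (by positivity)).le
      _ ≤ (D + 1) * δ⁻¹ := by rw [div_eq_mul_inv, add_mul, one_mul]; gcongr
  calc X * ⌈D / δ⌉₊ ^ e ≤ X * ((D + 1) * δ⁻¹) ^ e := by gcongr
    _ = X * (D + 1) ^ e * δ⁻¹ ^ e := by rw [mul_pow, mul_assoc]
    _ ≤ C * δ⁻¹ ^ C := hC _ hδ'
    _ = C * δ ^ (-C : ℝ) := by rw [Real.rpow_neg hδ.le, Real.rpow_natCast, inv_pow]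

lemma exists_rpow_const_forall_exists_scale (A m : ℕ) {D : ℝ} (hD : 1 ≤ D) :
    ∃ C : ℝ, 0 < C ∧ ∀ δ : ℝ, 0 < δ → δ ≤ 1 → ∃ R : ℕ, 0 < R ∧ D / R ≤ δ ∧
      A * R ^ A ≤ C * δ ^ (-C) ∧ 16 * R ^ 3 ≤ C * δ ^ (-C) ∧
      (16 * R ^ 3) ^ m * (δ ^ C / C) ≤ δ / 2 := by
  have hD₀ : 0 < D := by linarith
  obtain ⟨C, hC, hA, hshift, hcoeff⟩ := ((eventually_gt_atTop 0).and
    ((eventually_mul_natCeil_div_pow_le A.cast_nonneg hD₀.le A).and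
      ((eventually_mul_natCeil_div_pow_le (by norm_num : (0 : ℝ) ≤ 16) hD₀.le 3).and
        (eventually_mul_natCeil_div_pow_le (by positivity : (0 : ℝ) ≤ 2 * 16 ^ m) hD₀.le
          (3 * m + 1))))).exists
  refine ⟨C, by exact_mod_cast hC, fun δ hδ hδ₁ => ?_⟩
  have hR : D / δ ≤ ⌈D / δ⌉₊ := Nat.le_ceil _
  refine ⟨⌈D / δ⌉₊, Nat.ceil_pos.2 (by positivity), ?_, hA δ hδ hδ₁, hshift δ hδ hδ₁, ?_⟩
  · rwa [div_le_comm₀ (lt_of_lt_of_le (by positivity) hR) hδ]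
  have hCδ : δ ^ (C : ℝ) / C = (C * δ ^ (-C : ℝ))⁻¹ := by
    rw [Real.rpow_neg hδ.le, mul_inv, inv_inv, div_eq_inv_mul]
  have hδR : δ⁻¹ ≤ ⌈D / δ⌉₊ :=
    (by rw [inv_eq_one_div]; gcongr : δ⁻¹ ≤ D / δ).trans hR
  rw [hCδ, ← div_eq_mul_inv, div_le_iff₀ (by positivity)]
  calc (16 * (⌈D / δ⌉₊ : ℝ) ^ 3) ^ m = δ / 2 * (2 * (16 * ⌈D / δ⌉₊ ^ 3) ^ m * δ⁻¹) := by
        field_simp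
    _ ≤ δ / 2 * (2 * (16 * ⌈D / δ⌉₊ ^ 3) ^ m * ⌈D / δ⌉₊) := by gcongr
    _ = δ / 2 * (2 * 16 ^ m * ⌈D / δ⌉₊ ^ (3 * m + 1)) := by ring
    _ ≤ δ / 2 * (C * δ ^ (-C : ℝ)) := mul_le_mul_of_nonneg_left (hcoeff δ hδ hδ₁) (by positivity)

theorem stmt11_general {ι : Type*} [Fintype ι] {c : ι → ℝ} (hpos : ∀ i, 0 < c i)
    (hint : ∀ i, ∀ k : ℤ, c i ≠ k) :
    ∃ C : ℝ, 0 < C ∧ ∀ (N : ℕ) (δ : ℝ), 0 < δ → δ ≤ 1 →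
      ∀ ξ : ι → ℝ, (∀ i, |ξ i| ≤ 1 / 2) →
        δ ≤ ‖(N : ℂ)⁻¹ * ∑ n ∈ Icc 1 N,
          if N < 2 * n then eC (∑ i, ξ i * (⌊(n : ℝ) ^ c i⌋ : ℝ)) else 0‖ →
        (N : ℝ) ≤ C * δ ^ (-C) ∨
          ∃ k : ι → ℤ, (∀ i, |(k i : ℝ)| ≤ C * δ ^ (-C)) ∧
            δ ^ C / C ≤ ‖(N : ℂ)⁻¹ * ∑ n ∈ Icc 1 N,
              if N < 2 * n then eC (∑ i, (ξ i + k i) * (n : ℝ) ^ c i) else 0‖ := by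
  obtain ⟨A, htransfer⟩ := (eventually_exists_shift_norm_mean_floor_le hpos hint).exists
  -- `D / R ≤ δ` makes the interpolation error `20 * card ι / R` less than `δ / 2`.
  set D : ℝ := 40 * Fintype.card ι + 1 with hD
  obtain ⟨C, hC, hscale⟩ :=
    exists_rpow_const_forall_exists_scale A (Fintype.card ι) (by simp [hD] : 1 ≤ D)
  refine ⟨C, hC, fun N δ hδ hδ₁ ξ hξ hlarge => ?_⟩
  obtain ⟨R, hR, hDR, hAR, hshift, hcoeff⟩ := hscale δ hδ hδ₁
  rcases le_total (N : ℝ) (A * R ^ A) with hsmall | hN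
  · exact Or.inl (hsmall.trans hAR)
  obtain ⟨k, hk, hle⟩ := htransfer R N hR hN ξ hξ
  refine Or.inr ⟨k, fun i => (hk i).trans hshift, ?_⟩
  have herror : 20 * Fintype.card ι / R ≤ δ / 2 := by
    have : 20 * Fintype.card ι / R ≤ D / R / 2 := by
      rw [hD, div_right_comm]
      gcongr
      linarith
    linarith
  refine le_of_mul_le_mul_left ?_ (by positivity : (0 : ℝ) < (16 * R ^ 3) ^ Fintype.card ι)
  linarith

/-- removal of the floor function, Theorem 4.3 of the
paper: for non-integer `0 < c₁ < ⋯ < c_m` there is `C > 0` such that for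
every `N ≥ 1`, `δ ∈ (0,1]`, and `ξ₁,…,ξ_m ∈ [−1/2,1/2)`, if
`δ ≤ |m_{N;ℤ}(ξ)|` then either `N ≤ C δ^{−C}` or there exist integers
`k₁,…,k_m` with `|k_i| ≤ C δ^{−C}` such that
`δ^C/C ≤ |(1/N) ∑_{n=1}^N 1_{n>N/2} e((ξ₁+k₁)n^{c₁}+⋯+(ξ_m+k_m)n^{c_m})|`. -/
theorem stmt11 {m : ℕ} (hm : 0 < m) (c : Fin m → ℝ)
    (hpos : ∀ i, 0 < c i) (hmono : StrictMono c)
    (hint : ∀ i, ∀ k : ℤ, c i ≠ (k : ℝ)) :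
    ∃ C : ℝ, 0 < C ∧ ∀ N : ℕ, 1 ≤ N → ∀ δ : ℝ, 0 < δ → δ ≤ 1 →
      ∀ ξ : Fin m → ℝ, (∀ i, ξ i ∈ Set.Ico (-(1/2) : ℝ) (1/2)) →
        δ ≤ ‖mZ m c N ξ‖ →
        (N : ℝ) ≤ C * δ ^ (-C) ∨
          ∃ k : Fin m → ℤ, (∀ i, |(k i : ℝ)| ≤ C * δ ^ (-C)) ∧
            δ ^ C / C ≤ ‖(N : ℂ)⁻¹ * ∑ n ∈ Finset.Icc 1 N,
              (if N < 2 * n then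
                eC (∑ i, (ξ i + (k i : ℝ)) * (n : ℝ) ^ c i) else 0)‖ := by
  obtain ⟨C, hC, h⟩ := stmt11_general hpos hint
  exact ⟨C, hC, fun N _ δ hδ hδ₁ ξ hξ => h N δ hδ hδ₁ ξ fun i => abs_le.2
    ⟨(hξ i).1, (hξ i).2.le⟩⟩

end
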